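/- arXiv:1201.4468 — 2 statements merged into one kernel-verified Lean document; each statement's English description precedes it below -/
import Mathlib

section
/- Let a ≥ 1 and 0 ≤ b < a be integers with gcd(a,b) = 1, let m ≥ 1 be an integer, and let c1 ≤ c2 be integers with 0 ≤ c1 ≤ c2 < a such that for every integer c', u(c') = u(c1) if and only if the residue of c' modulo a lies in [c1, c2]. Then for every integer c' with c1 ≤ c' ≤ c2, there exists an integer x with 0 ≤ x ≤ m and bx + c' ≡ a − 1 (mod a) if and only if c' = c2. -/
/-- The `k`-th letter `⌊(b(k+1)+c)/a⌋ - ⌊(bk+c)/a⌋` of the word defined by the line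
`y = (b/a)x + c/a`. -/
noncomputable def lineLetter (a b c : ℤ) (k : ℕ) : ℤ :=
  ⌊((b * ((k : ℤ) + 1) + c : ℤ) : ℝ) / (a : ℝ)⌋ - ⌊((b * (k : ℤ) + c : ℤ) : ℝ) / (a : ℝ)⌋

lemma lineLetter_eq_ediv {a : ℤ} (ha : 0 < a) (b c : ℤ) (k : ℕ) :
    lineLetter a b c k = (b * ((k : ℤ) + 1) + c) / a - (b * (k : ℤ) + c) / a := by
  have floor_div (n : ℤ) : ⌊(n : ℝ) / (a : ℝ)⌋ = n / a := by
    have ha' : (0 : ℝ) < a := by exact_mod_cast ha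
    rw [Int.floor_eq_iff, le_div_iff₀ ha', div_lt_iff₀ ha']
    constructor
    · exact_mod_cast Int.ediv_mul_le n ha.ne'
    · exact_mod_cast Int.lt_ediv_add_one_mul_self n ha
  simp only [lineLetter, floor_div]

lemma ediv_add_one_of_emod_ne {a n : ℤ} (ha : 0 < a) (h : n % a ≠ a - 1) :
    (n + 1) / a = n / a := by
  have h0 := Int.emod_nonneg n ha.ne'
  have h1 := Int.emod_lt_of_pos n ha
  have h2 := Int.emod_add_mul_ediv n a
  exact ((Int.ediv_emod_unique (r := n % a + 1) ha).2 ⟨by linarith, by omega, by omega⟩).1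

lemma ediv_add_one_of_emod_eq {a n : ℤ} (ha : 0 < a) (h : n % a = a - 1) :
    (n + 1) / a = n / a + 1 := by
  have h2 := Int.emod_add_mul_ediv n a
  exact ((Int.ediv_emod_unique (r := 0) ha).2 ⟨by linarith, le_rfl, ha⟩).1

/-- Lines with equal words of length `m` climb equally up to every abscissa `k ≤ m`. -/
lemma ediv_sub_ediv_eq_of_lineLetter_eq {a : ℤ} (ha : 0 < a) {b c d : ℤ} {m : ℕ}
    (h : ∀ k : ℕ, k < m → lineLetter a b c k = lineLetter a b d k) (k : ℕ) (hk : k ≤ m) :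
    (b * (k : ℤ) + c) / a - c / a = (b * (k : ℤ) + d) / a - d / a := by
  induction k with
  | zero => simp
  | succ k ih =>
    have hl := h k hk
    have := ih (by omega)
    rw [lineLetter_eq_ediv ha, lineLetter_eq_ediv ha] at hl
    push_cast
    linarith

/-- Among the lines `y = (b/a)x + c'/a` with `c1 ≤ c' ≤ c2` representing a fixed
word of length `m`, only the one with `c' = c2` passes through a point `(x,y)`
with `0 ≤ x ≤ m` and `y ≡ (a-1)/a (mod 1)`, i.e. `bx + c' ≡ a-1 (mod a)`. -/
theorem top_line_meets_grid (a b : ℤ) (ha : 1 ≤ a) (hb0 : 0 ≤ b) (hba : b < a)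
    (hgcd : Int.gcd a b = 1) (m : ℕ) (hm : 1 ≤ m) (c1 c2 : ℤ)
    (hc1 : 0 ≤ c1) (hc12 : c1 ≤ c2) (hc2 : c2 < a)
    (hchar : ∀ c' : ℤ,
      (∀ k : ℕ, k < m → lineLetter a b c' k = lineLetter a b c1 k) ↔
        (c1 ≤ c' % a ∧ c' % a ≤ c2)) :
    ∀ c' : ℤ, c1 ≤ c' → c' ≤ c2 →
      ((∃ x : ℤ, 0 ≤ x ∧ x ≤ (m : ℤ) ∧ (b * x + c') % a = (a - 1) % a) ↔ c' = c2) := by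
  have ha0 : 0 < a := by omega
  have hlast : (a - 1) % a = a - 1 := Int.emod_eq_of_lt (by omega) (by omega)
  rw [hlast]
  intro c' h1 h2
  have same_word (c : ℤ) (hl : c1 ≤ c) (hu : c ≤ c2) := (hchar c).2 (by
    rw [Int.emod_eq_of_lt (by omega) (by omega)]
    exact ⟨hl, hu⟩)
  constructor
  · rintro ⟨x, hx0, hxm, hx⟩
    by_contra hne
    lift x to ℕ using hx0
    have hclimb := ediv_sub_ediv_eq_of_lineLetter_eq ha0
      (fun k hk => (same_word (c' + 1) (by omega) (by omega) k hk).trans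
        (same_word c' h1 h2 k hk).symm) x (by omega)
    rw [← add_assoc, ediv_add_one_of_emod_eq ha0 hx,
      Int.ediv_eq_zero_of_lt (a := c' + 1) (by omega) (by omega),
      Int.ediv_eq_zero_of_lt (a := c') (by omega) (by omega)] at hclimb
    omega
  · rintro rfl
    by_contra! hno
    have hne : c' ≠ a - 1 := fun h =>
      hno 0 le_rfl (by omega) (by rw [mul_zero, zero_add, h, hlast])
    have hnext := (hchar (c' + 1)).1 fun k hk => by
      rw [← same_word c' h1 le_rfl k hk, lineLetter_eq_ediv ha0, lineLetter_eq_ediv ha0,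
        ← add_assoc, ← add_assoc,
        ediv_add_one_of_emod_ne ha0 (hno (k + 1) (by omega) (by omega)),
        ediv_add_one_of_emod_ne ha0 (hno k (by omega) (by omega))]
    rw [Int.emod_eq_of_lt (by omega) (by omega)] at hnext
    omega
end

section
/- Let ω be an infinite binary word and let u be a factor of ω that occurs at infinitely many positions in ω. If u has exactly one return word in ω, then ω is eventually periodic, i.e., there exist an integer N ≥ 0 and an integer p ≥ 1 such that ω_{k+p} = ω_k for all k ≥ N. -/
/-- `w_k` equals `⌊(k+1)α+ρ⌋ - ⌊kα+ρ⌋` for all `k < |w|` (letter `true` stands for `1`). -/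
def DefinesWord (α ρ : ℝ) (w : List Bool) : Prop :=
  ∀ k : ℕ, (h : k < w.length) →
    (if w.get ⟨k, h⟩ then (1 : ℤ) else 0) = ⌊((k : ℝ) + 1) * α + ρ⌋ - ⌊(k : ℝ) * α + ρ⌋

/-- A finite Sturmian word. -/
def IsFiniteSturmian (w : List Bool) : Prop :=
  ∃ α ρ : ℝ, α ∈ Set.Ioo (0 : ℝ) 1 ∧ ρ ∈ Set.Ioo (0 : ℝ) 1 ∧ DefinesWord α ρ w

/-- `A n`, the set of finite Sturmian words of length `n`. -/
def sturmianWords (n : ℕ) : Set (List Bool) :=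
  {w | w.length = n ∧ IsFiniteSturmian w}

/-- `(i,j)` is an integer point of the line `y = αx + ρ` (here `l = (α,ρ)`). -/
def IsIntegerPoint (l : ℝ × ℝ) (p : ℤ × ℤ) : Prop :=
  (p.2 : ℝ) = l.1 * p.1 + l.2

/-- `Z_k(ℓ)`: the number of integer points `(i,j)` of `ℓ` with `0 ≤ i ≤ k`. -/
noncomputable def Zpts (k : ℝ) (l : ℝ × ℝ) : ℕ :=
  {p : ℤ × ℤ | 0 ≤ p.1 ∧ (p.1 : ℝ) ≤ k ∧ IsIntegerPoint l p}.ncard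

/-- The set `S_n` of lines `(α,ρ)` with `α, ρ ∈ (0,1)`. -/
def Sset : Set (ℝ × ℝ) := Set.Ioo 0 1 ×ˢ Set.Ioo 0 1

/-- The set `L_n` of lines `(α,ρ)` with `α, ρ ∈ [0,1]` and `Z_n(ℓ) ≥ 2`. -/
def Lset (n : ℕ) : Set (ℝ × ℝ) :=
  {l | l.1 ∈ Set.Icc (0 : ℝ) 1 ∧ l.2 ∈ Set.Icc (0 : ℝ) 1 ∧ 2 ≤ Zpts n l}

/-- The set `m(ℓ) ⊆ A_n`. -/
def mImage (n : ℕ) (l : ℝ × ℝ) : Set (List Bool) :=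
  {w | w ∈ sturmianWords n ∧ ∃ l' : ℝ × ℝ, l' ∈ Sset ∧ DefinesWord l'.1 l'.2 w ∧
    (¬ ∃ p : ℤ × ℤ, 0 ≤ p.1 ∧ (p.1 : ℝ) ≤ n ∧
        min (l.1 * p.1 + l.2) (l'.1 * p.1 + l'.2) < (p.2 : ℝ) ∧
        (p.2 : ℝ) < max (l.1 * p.1 + l.2) (l'.1 * p.1 + l'.2)) ∧
    (∃ p1 p2 : ℤ × ℤ, IsIntegerPoint l p1 ∧ IsIntegerPoint l p2 ∧
      0 ≤ p1.1 ∧ (p1.1 : ℝ) ≤ n / 2 ∧ (n / 2 : ℝ) < (p2.1 : ℝ) ∧ (p2.1 : ℝ) ≤ n ∧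
      (p1.2 : ℝ) < l'.1 * p1.1 + l'.2 ∧ (p2.2 : ℝ) < l'.1 * p2.1 + l'.2)}

/-- The word `w` goes through the grid point `p = (i,j)`:
exactly `j` of the first `i` letters of `w` equal `1`. -/
def GoesThrough (w : List Bool) (p : ℤ × ℤ) : Prop :=
  ((w.take p.1.toNat).count true : ℤ) = p.2

/-- The word `u` occurs in the infinite word `ω` at position `i`. -/
def OccursAt (u : List Bool) (ω : ℕ → Bool) (i : ℕ) : Prop :=
  ∀ k : ℕ, (h : k < u.length) → u.get ⟨k, h⟩ = ω (i + k)

/-- `u` is a factor of the infinite word `ω`. -/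
def IsFactor (u : List Bool) (ω : ℕ → Bool) : Prop := ∃ i, OccursAt u ω i

/-- `ω` is a Sturmian infinite word: it has exactly `n+1` factors of length `n` for all `n`. -/
def IsSturmian (ω : ℕ → Bool) : Prop :=
  ∀ n : ℕ, {u : List Bool | u.length = n ∧ IsFactor u ω}.ncard = n + 1

/-- `v` is a return word of `u` in `ω`. -/
def IsReturnWord (ω : ℕ → Bool) (u v : List Bool) : Prop :=
  v ≠ [] ∧ IsFactor (v ++ u) ω ∧ u <+: v ++ u ∧ u <:+ v ++ u ∧
    {i : ℕ | i + u.length ≤ (v ++ u).length ∧ u <+: (v ++ u).drop i}.ncard = 2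

/-- The factor of `ω` of length `n` starting at position `i`. -/
def window (ω : ℕ → Bool) (i n : ℕ) : List Bool := (List.range n).map fun k => ω (i + k)

@[simp]
theorem length_window (ω : ℕ → Bool) (i n : ℕ) : (window ω i n).length = n := by
  simp [window]

theorem window_append (ω : ℕ → Bool) (i m n : ℕ) :
    window ω i m ++ window ω (i + m) n = window ω i (m + n) := by
  simp [window, List.range_add, Function.comp_def, Nat.add_assoc]

theorem drop_window (ω : ℕ → Bool) (i k n : ℕ) :
    (window ω i n).drop k = window ω (i + k) (n - k) := by
  apply List.ext_getElem <;> simp [window, Nat.add_assoc]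

theorem occursAt_iff_window_eq (u : List Bool) (ω : ℕ → Bool) (i : ℕ) :
    OccursAt u ω i ↔ window ω i u.length = u := by
  constructor
  · intro h
    apply List.ext_getElem
    · simp
    · intro k _ hk
      simpa [window] using (h k hk).symm
  · intro h k hk
    have := List.getElem_of_eq h.symm hk
    simpa [window] using this

theorem occursAt_window (ω : ℕ → Bool) (i n : ℕ) : OccursAt (window ω i n) ω i := by
  simp [occursAt_iff_window_eq]

theorem prefix_window_iff (u : List Bool) (ω : ℕ → Bool) (i n : ℕ) (hn : u.length ≤ n) :
    u <+: window ω i n ↔ OccursAt u ω i := by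
  obtain ⟨m, rfl⟩ := Nat.exists_eq_add_of_le hn
  rw [occursAt_iff_window_eq, ← window_append]
  constructor
  · intro h
    exact (List.prefix_of_prefix_length_le (List.prefix_append _ _) h (by simp)).eq_of_length
      (by simp)
  · intro h
    rw [h]
    exact List.prefix_append _ _

/-- The word read between two consecutive occurrences of `u` is a return word of `u`. -/
theorem isReturnWord_window {ω : ℕ → Bool} {u : List Bool} {i d : ℕ} (hd : 0 < d)
    (hi : OccursAt u ω i) (hj : OccursAt u ω (i + d))
    (hbetween : ∀ k, 0 < k → k < d → ¬ OccursAt u ω (i + k)) :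
    IsReturnWord ω u (window ω i d) := by
  have happ : window ω i d ++ u = window ω i (d + u.length) := by
    rw [← window_append, (occursAt_iff_window_eq u ω (i + d)).1 hj]
  refine ⟨?_, ?_, ?_, List.suffix_append _ _, ?_⟩
  · rw [← List.length_pos_iff]
    simpa using hd
  · rw [happ]
    exact ⟨i, occursAt_window _ _ _⟩
  · rw [happ]
    exact (prefix_window_iff u ω i _ (by omega)).2 hi
  · have hset : {k : ℕ | k + u.length ≤ (window ω i d ++ u).length ∧
        u <+: (window ω i d ++ u).drop k} = {0, d} := by
      ext k
      rw [happ]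
      simp only [length_window, drop_window, Set.mem_ofPred_eq, Set.mem_insert_iff,
        Set.mem_singleton_iff]
      constructor
      · rintro ⟨hk, hpre⟩
        rw [prefix_window_iff u ω _ _ (by omega)] at hpre
        by_contra hne
        exact hbetween k (by omega) (by omega) hpre
      · rintro (rfl | rfl)
        · exact ⟨by omega, (prefix_window_iff u ω _ _ (by omega)).2 hi⟩
        · exact ⟨le_rfl, (prefix_window_iff u ω _ _ (by omega)).2 hj⟩
    rw [hset, Set.ncard_pair hd.ne]

/-- Every occurrence of a word occurring infinitely often is followed by a next one, and the word
read in between is a return word. -/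
theorem exists_isReturnWord_window {ω : ℕ → Bool} {u : List Bool}
    (hu : {i : ℕ | OccursAt u ω i}.Infinite) {i : ℕ} (hi : OccursAt u ω i) :
    ∃ d, 0 < d ∧ OccursAt u ω (i + d) ∧ IsReturnWord ω u (window ω i d) := by
  classical
  have hex : ∃ d, 0 < d ∧ OccursAt u ω (i + d) := by
    obtain ⟨j, hj, hij⟩ := hu.exists_gt i
    exact ⟨j - i, by omega, by rwa [Nat.add_sub_cancel' hij.le]⟩
  obtain ⟨hpos, hocc⟩ := Nat.find_spec hex
  exact ⟨Nat.find hex, hpos, hocc, isReturnWord_window hpos hi hocc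
    fun k hk hlt h => Nat.find_min hex hlt ⟨hk, h⟩⟩

/-- If a factor `u` occurring infinitely often in an infinite binary word `ω` has
exactly one return word, then `ω` is eventually periodic. -/
theorem one_return_eventually_periodic (ω : ℕ → Bool) (u : List Bool)
    (hu : {i : ℕ | OccursAt u ω i}.Infinite)
    (hret : ∃! v : List Bool, IsReturnWord ω u v) :
    ∃ N : ℕ, ∃ p : ℕ, 1 ≤ p ∧ ∀ k : ℕ, N ≤ k → ω (k + p) = ω k := by
  obtain ⟨v, hv, huniq⟩ := hret
  have hstep : ∀ i, OccursAt u ω i → OccursAt u ω (i + v.length) ∧ OccursAt v ω i := by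
    intro i hi
    obtain ⟨d, -, hocc, hwin⟩ := exists_isReturnWord_window hu hi
    have hvd := huniq _ hwin
    have hlen : v.length = d := by rw [← hvd, length_window]
    exact ⟨hlen ▸ hocc, hvd ▸ occursAt_window ω i d⟩
  have hpos : 0 < v.length := List.length_pos_iff.2 hv.1
  obtain ⟨N, hN⟩ := hu.nonempty
  have hocc : ∀ m, OccursAt u ω (N + v.length * m) := by
    intro m
    induction m with
    | zero => simpa using hN
    | succ m ih => simpa [Nat.mul_succ, Nat.add_assoc] using (hstep _ ih).1
  refine ⟨N, v.length, hpos, fun k hk => ?_⟩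
  have hr : (k - N) % v.length < v.length := Nat.mod_lt _ hpos
  have hdiv := Nat.div_add_mod (k - N) v.length
  have h₀ := (hstep _ (hocc ((k - N) / v.length))).2 _ hr
  have h₁ := (hstep _ (hocc ((k - N) / v.length + 1))).2 _ hr
  rw [h₀, Nat.mul_succ] at h₁
  convert h₁.symm using 2 <;> omega
end
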